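/- arXiv:1501.03774 — 2 statements merged into one kernel-verified Lean document; each statement's English description precedes it below -/
import Mathlib

section
/- Let P*₁₀(u,v) denote the g-edge obtained from the Petersen graph by deleting one edge uv, with terminals u and v. Then the open 5-capacity of P*₁₀(u,v) equals the interval (4,1) of ℝ/5ℤ. -/
open Finset


open Finset

/-- A finite multigraph given with a reference orientation: each edge `e` goes
from `src e` to `tgt e`.  An orientation of the graph is a sign function
`σ : E → ℤˣ` telling, for each edge, whether it keeps (`1`) or reverses (`-1`)
its reference direction. -/
structure Multigraph where
  V : Type
  E : Type
  [fintV : Fintype V]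
  [fintE : Fintype E]
  [decV : DecidableEq V]
  [decE : DecidableEq E]
  src : E → V
  tgt : E → V

attribute [instance] Multigraph.fintV Multigraph.fintE Multigraph.decV Multigraph.decE

/-- `f` is a flow with respect to the reference orientation: at every vertex the
sum over outgoing edges equals the sum over incoming edges. -/
def Multigraph.IsFlow (G : Multigraph) {M : Type*} [AddCommMonoid M] (f : G.E → M) : Prop :=
  ∀ v : G.V,
    ∑ e ∈ Finset.univ.filter (fun e => G.src e = v), f e =
    ∑ e ∈ Finset.univ.filter (fun e => G.tgt e = v), f e

/-- `f` is a flow on the orientation `σ` of `G` (values of `f` are read in the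
direction given by `σ`). -/
def Multigraph.IsFlowOn (G : Multigraph) {M : Type*} [AddCommGroup M]
    (σ : G.E → ℤˣ) (f : G.E → M) : Prop :=
  G.IsFlow (fun e => ((σ e : ℤ) • f e))

/-- The open interval `(a,b)` of `ℝ/rℤ`: the points traversed strictly clockwise
from `a` to `b`, with the convention `(a,a) = ℝ/rℤ \ {a}`. -/
noncomputable def openArc (r a b : ℝ) : Set (AddCircle r) :=
  (fun t : ℝ => (t : AddCircle r)) '' Set.Ioo a (a + (r - Int.fract ((a - b) / r) * r))

/-- The closed interval `[a,b]` of `ℝ/rℤ`: the points traversed clockwise from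
`a` to `b`, endpoints included, with the convention `[a,a] = {a}`. -/
noncomputable def closedArc (r a b : ℝ) : Set (AddCircle r) :=
  (fun t : ℝ => (t : AddCircle r)) '' Set.Icc a (a + Int.fract ((b - a) / r) * r)

/-- `G` has a circular nowhere-zero `r`-flow: an orientation together with a
real-valued flow all of whose values lie in `[1, r-1]`. -/
def Multigraph.HasCNZF (G : Multigraph) (r : ℝ) : Prop :=
  ∃ (σ : G.E → ℤˣ) (f : G.E → ℝ), G.IsFlowOn σ f ∧ ∀ e, f e ∈ Set.Icc (1:ℝ) (r - 1)

/-- The circular flow number of `G`, as an extended real (`⊤` if `G` admits no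
circular nowhere-zero `r`-flow for any `r`, e.g. if `G` has a bridge). -/
noncomputable def circFlowNumber (G : Multigraph) : EReal :=
  sInf {x : EReal | ∃ r : ℝ, x = (r : EReal) ∧ G.HasCNZF r}

/-- The graph `G ∪ e₀` obtained from `G` by adding one extra edge `e₀ = none`
joining `u` to `v`. -/
def Multigraph.addEdge (G : Multigraph) (u v : G.V) : Multigraph where
  V := G.V
  E := Option G.E
  src := fun e => e.elim u G.src
  tgt := fun e => e.elim v G.tgt

/-- The capacity of the capacitated g-edge `(G, cap)` with terminals `u,v`:
all values `f e₀` of modular flows `f` on `G ∪ e₀` (over all orientations) whose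
value on each edge `e` of `G` lies in the prescribed set `cap e`. -/
def CPcap (r : ℝ) (G : Multigraph) (cap : G.E → Set (AddCircle r)) (u v : G.V) :
    Set (AddCircle r) :=
  {t | ∃ (σ : Option G.E → ℤˣ) (f : Option G.E → AddCircle r),
        (G.addEdge u v).IsFlowOn σ f ∧ (∀ e : G.E, f (some e) ∈ cap e) ∧ f none = t}

/-- The open `r`-capacity `CP_r(G_{u,v})` of the g-edge `G_{u,v}`. -/
noncomputable def CP (r : ℝ) (G : Multigraph) (u v : G.V) : Set (AddCircle r) :=
  CPcap r G (fun _ => openArc r 1 (r - 1)) u v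

/-- A capacitated graph `(G, cap)` admits a flow respecting all capacities
(for `cap e = (1,4) ⊆ ℝ/5ℤ` everywhere this is a sub-5-MCNZF). -/
def HasCapFlow (r : ℝ) (G : Multigraph) (cap : G.E → Set (AddCircle r)) : Prop :=
  ∃ (σ : G.E → ℤˣ) (f : G.E → AddCircle r), G.IsFlowOn σ f ∧ ∀ e, f e ∈ cap e

/-- Deletion of the edge `e₀`. -/
def Multigraph.deleteEdge (G : Multigraph) (e₀ : G.E) : Multigraph where
  V := G.V
  E := {e : G.E // e ≠ e₀}
  src := fun e => G.src e.1
  tgt := fun e => G.tgt e.1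

/-- Degree of a vertex (loops count twice). -/
def Multigraph.degree (G : Multigraph) (v : G.V) : ℕ :=
  (Finset.univ.filter (fun e => G.src e = v)).card +
  (Finset.univ.filter (fun e => G.tgt e = v)).card

/-- The tail of edge `e` in the orientation `σ`. -/
def Multigraph.osrc (G : Multigraph) (σ : G.E → ℤˣ) (e : G.E) : G.V :=
  if σ e = 1 then G.src e else G.tgt e

/-- The head of edge `e` in the orientation `σ`. -/
def Multigraph.otgt (G : Multigraph) (σ : G.E → ℤˣ) (e : G.E) : G.V :=
  if σ e = 1 then G.tgt e else G.src e

/-- An injective key used to pick one reference direction for each edge of the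
Petersen graph. -/
def pkey (s : Finset (Fin 5)) : ℕ := ∑ i ∈ s, 2 ^ (i : ℕ)

/-- The Petersen graph: the Kneser graph on the 2-element subsets of a 5-element
set, two subsets adjacent when disjoint (each edge listed once, in the direction
of increasing key). -/
def petersen : Multigraph where
  V := {s : Finset (Fin 5) // s.card = 2}
  E := {p : {s : Finset (Fin 5) // s.card = 2} × {s : Finset (Fin 5) // s.card = 2} //
          Disjoint p.1.1 p.2.1 ∧ pkey p.1.1 < pkey p.2.1}
  src := fun p => p.1.1
  tgt := fun p => p.1.2

/-!
In terms of the norm of `AddCircle 5` (distance to `0`), the arc `(1,4)` is `‖x‖ > 1` and the arc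
`(4,1)` is `‖x‖ < 1`.

If a modular flow had norm `> 1` on every edge but `e₀`, and `≥ 1` on `e₀`, then it would yield
(a modular version of Jaeger's balanced valuations) odd integers `w v` with
`5 * |∑ v ∈ S, w v| < 3 * |∂S|` whenever `|∂S| > 1`. For the Petersen graph this means `w v = ±1`,
`∑ w = 0`, and no path on three vertices is monochromatic. Hence at most one neighbour of `v` shares
the sign of `v`, so `s v`, the sum of `w` over the neighbours of `v`, is `-w v` or `-3 * w v`, and
`s v ^ 2 + w v * s v ∈ {0, 6}`. But the adjacency matrix satisfies `A² + A - 2 = J`, so these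
numbers add up to `2 * 10 = 20`, which is not divisible by `6`.

Conversely, a value `t` with `|t| < 1` is attained on `e₀` by `5/4` times a nowhere-zero `ℤ/4`-flow
avoiding `e₀` plus `t/4` times a flow of value `4` on `e₀`, the latter dominated by the former.
-/

section AddCircle

variable {r : ℝ}

theorem exists_coe_eq_and_abs_eq_norm (x : AddCircle r) :
    ∃ y : ℝ, (y : AddCircle r) = x ∧ |y| = ‖x‖ := by
  induction x using QuotientAddGroup.induction_on with
  | H z =>
    refine ⟨z - round (r⁻¹ * z) * r, ?_, (AddCircle.norm_eq r).symm⟩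
    rw [AddCircle.coe_sub, sub_eq_self, AddCircle.coe_eq_zero_iff]
    exact ⟨round (r⁻¹ * z), zsmul_eq_mul _ _⟩

theorem exists_coe_eq_and_abs_sub_half_eq (x : AddCircle r) :
    ∃ y : ℝ, (y : AddCircle r) = x ∧ |y - r / 2| = |r / 2 - ‖x‖| := by
  obtain ⟨y, rfl, hy⟩ := exists_coe_eq_and_abs_eq_norm x
  rcases abs_cases y with ⟨hpos, -⟩ | ⟨hneg, -⟩
  · exact ⟨y, rfl, by rw [← hy, hpos, abs_sub_comm]⟩
  · refine ⟨y + r, AddCircle.coe_add_period r y, ?_⟩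
    rw [← hy, hneg]
    ring_nf

theorem lt_norm_coe_of_abs_mem_Ioo {c y : ℝ} (hy : |y| ∈ Set.Ioo c (r - c)) :
    c < ‖(y : AddCircle r)‖ := by
  rcases lt_or_ge c 0 with hc | hc
  · exact hc.trans_le (norm_nonneg _)
  rw [AddCircle.norm_eq]
  set k := round (r⁻¹ * y)
  rcases eq_or_ne k 0 with hk | hk
  · simpa [hk] using hy.1
  · have hr : 0 < r := by linarith [hy.1, hy.2]
    have hk₁ : (1 : ℝ) ≤ |(k : ℝ)| := by exact_mod_cast Int.one_le_abs hk
    calc c < r - |y| := by linarith [hy.2]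
      _ ≤ |k * r| - |y| := by
        rw [abs_mul, abs_of_pos hr]
        gcongr
        exact le_mul_of_one_le_left hr.le hk₁
      _ ≤ |k * r - y| := abs_sub_abs_le_abs_sub _ _
      _ = |y - k * r| := abs_sub_comm _ _

theorem openArc_eq_image_Ioo {a b : ℝ} (hr : 0 < r) (k : ℤ)
    (hb : b + k * r ∈ Set.Ioc a (a + r)) :
    openArc r a b = (fun t : ℝ ↦ (t : AddCircle r)) '' Set.Ioo a (b + k * r) := by
  have hfract : Int.fract ((a - b) / r) = (a - b - k * r) / r + 1 := by
    rw [Int.fract_eq_iff]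
    refine ⟨?_, ?_, k - 1, ?_⟩
    · have : -1 ≤ (a - b - k * r) / r := by rw [le_div_iff₀ hr]; linarith [hb.2]
      linarith
    · have : (a - b - k * r) / r < 0 := div_neg_of_neg_of_pos (by linarith [hb.1]) hr
      linarith
    · push_cast
      field_simp
      ring
  have hend : a + (r - ((a - b - k * r) / r + 1) * r) = b + k * r := by
    field_simp
    ring
  rw [openArc, hfract, hend]

theorem openArc_one_sub_one (hr : 2 < r) : openArc r 1 (r - 1) = {x | 1 < ‖x‖} := by
  rw [openArc_eq_image_Ioo (by linarith) 0 (by constructor <;> simp <;> linarith)]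
  ext x
  constructor
  · rintro ⟨y, hy, rfl⟩
    refine lt_norm_coe_of_abs_mem_Ioo ?_
    rw [abs_of_pos (one_pos.trans hy.1)]
    simpa using hy
  · intro hx
    obtain ⟨y, rfl, hy⟩ := exists_coe_eq_and_abs_sub_half_eq x
    have hnorm := AddCircle.norm_le_half_period r (x := y) (by linarith)
    rw [abs_of_pos (by linarith)] at hnorm
    rw [abs_of_nonneg (sub_nonneg.2 hnorm)] at hy
    obtain ⟨hlo, hhi⟩ := abs_le.1 hy.le
    have hx : 1 < ‖(y : AddCircle r)‖ := hx
    exact ⟨y, by constructor <;> push_cast <;> linarith, rfl⟩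

theorem openArc_sub_one_one (hr : 2 < r) : openArc r (r - 1) 1 = {x | ‖x‖ < 1} := by
  rw [openArc_eq_image_Ioo (by linarith) 1 (by constructor <;> simp <;> linarith)]
  ext x
  constructor
  · rintro ⟨y, hy, rfl⟩
    calc ‖(y : AddCircle r)‖
      _ = ‖((y - r : ℝ) : AddCircle r)‖ := by
        rw [AddCircle.coe_sub, AddCircle.coe_period, sub_zero]
      _ ≤ ‖y - r‖ := QuotientAddGroup.norm_mk_le_norm
      _ < 1 := by
        rw [Real.norm_eq_abs, abs_lt]
        push_cast at hy
        constructor <;> linarith [hy.1, hy.2]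
  · intro hx
    obtain ⟨y, rfl, hy⟩ := exists_coe_eq_and_abs_eq_norm x
    obtain ⟨hlo, hhi⟩ := abs_lt.1 (hy.trans_lt hx)
    exact ⟨y + r, by constructor <;> push_cast <;> linarith, AddCircle.coe_add_period r y⟩

end AddCircle

namespace Multigraph

variable (G : Multigraph) {M : Type*}

section NetOut

variable [AddCommGroup M]

/-- The net outflow of `f` at the vertex `v`: outgoing minus incoming values in the reference
orientation. Flows are the `f` for which it vanishes everywhere. -/
def netOut (f : G.E → M) (v : G.V) : M :=
  ∑ e with G.src e = v, f e - ∑ e with G.tgt e = v, f e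

theorem isFlow_iff_netOut_eq_zero (f : G.E → M) : G.IsFlow f ↔ ∀ v, G.netOut f v = 0 := by
  simp only [IsFlow, netOut, sub_eq_zero]

theorem netOut_add (f g : G.E → M) (v : G.V) :
    G.netOut (fun e ↦ f e + g e) v = G.netOut f v + G.netOut g v := by
  simp only [netOut, sum_add_distrib]
  abel

theorem netOut_map {N : Type*} [AddCommGroup N] (φ : M →+ N) (f : G.E → M) (v : G.V) :
    G.netOut (fun e ↦ φ (f e)) v = φ (G.netOut f v) := by
  simp only [netOut, map_sub, map_sum]

theorem netOut_coe {r : ℝ} (y : G.E → ℝ) (v : G.V) :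
    G.netOut (fun e ↦ (y e : AddCircle r)) v = (G.netOut y v : ℝ) :=
  G.netOut_map (QuotientAddGroup.mk' _) y v

theorem netOut_zsmul_const (n : G.E → ℤ) (x : M) (v : G.V) :
    G.netOut (fun e ↦ n e • x) v = G.netOut n v • x :=
  G.netOut_map (zmultiplesHom M x) n v

theorem sum_netOut (f : G.E → M) (S : Finset G.V) :
    ∑ v ∈ S, G.netOut f v = ∑ e with G.src e ∈ S, f e - ∑ e with G.tgt e ∈ S, f e := by
  simp only [netOut, sum_sub_distrib, sum_fiberwise_eq_sum_filter]

end NetOut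

/-- The edge cut `∂S`, that is, the edges with exactly one end in `S`. -/
def boundary (S : Finset G.V) : Finset G.E := {e | ¬(G.src e ∈ S ↔ G.tgt e ∈ S)}

theorem boundary_univ : G.boundary univ = ∅ := by
  simp [boundary]

theorem norm_sum_netOut_le [SeminormedAddCommGroup M] (f : G.E → M) (S : Finset G.V) :
    ‖∑ v ∈ S, G.netOut f v‖ ≤ ∑ e ∈ G.boundary S, ‖f e‖ := by
  rw [sum_netOut, sum_filter, sum_filter, ← sum_sub_distrib, boundary, sum_filter]
  refine norm_sum_le_of_le _ fun e _ ↦ ?_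
  by_cases hs : G.src e ∈ S <;> by_cases ht : G.tgt e ∈ S <;> simp [hs, ht]

section BalancedValuation

variable {G} {r : ℝ} {f : G.E → AddCircle r}

/- Centre a lift `y` of `f` at `r / 2`: the net outflow of `y - r / 2` is an integral multiple of
`r / 2` at each vertex, while `y - r / 2` is bounded by `r / 2 - ‖f‖` on each edge. -/
theorem IsFlow.exists_balanced_valuation (hr : 0 < r) (hf : G.IsFlow f) :
    ∃ w : G.V → ℤ, (∀ v, Even (w v + G.degree v)) ∧
      ∀ S, r * |∑ v ∈ S, (w v : ℝ)| ≤ ∑ e ∈ G.boundary S, (r - 2 * ‖f e‖) := by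
  choose y hyf hy using fun e ↦ exists_coe_eq_and_abs_sub_half_eq (f e)
  have hint : ∀ v, ∃ n : ℤ, n • r = G.netOut y v := fun v ↦ by
    rw [← AddCircle.coe_eq_zero_iff, ← netOut_coe]
    simpa only [hyf] using (G.isFlow_iff_netOut_eq_zero f).1 hf v
  choose n hn using hint
  have hnorm : ∀ e, ‖f e‖ ≤ r / 2 := fun e ↦ by
    simpa [abs_of_pos hr] using AddCircle.norm_le_half_period r (x := f e) hr.ne'
  let w : G.V → ℤ := fun v ↦ 2 * n v - G.netOut (fun _ ↦ 1) v
  have hw : ∀ v, r / 2 * w v = G.netOut (fun e ↦ y e - r / 2) v := fun v ↦ by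
    simp only [w, netOut, sum_sub_distrib, sum_const, nsmul_eq_mul] at hn ⊢
    push_cast
    linear_combination hn v
  refine ⟨w, fun v ↦ ?_, fun S ↦ ?_⟩
  · refine ⟨n v + #{e | G.tgt e = v}, ?_⟩
    simp only [w, netOut, degree, sum_const, nsmul_eq_mul, mul_one, Nat.cast_add]
    ring
  · calc r * |∑ v ∈ S, (w v : ℝ)| = 2 * ‖∑ v ∈ S, G.netOut (fun e ↦ y e - r / 2) v‖ := by
          rw [← sum_congr rfl fun v _ ↦ hw v, ← mul_sum, norm_mul, Real.norm_eq_abs,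
            Real.norm_eq_abs, abs_of_pos (half_pos hr)]
          ring
      _ ≤ 2 * ∑ e ∈ G.boundary S, ‖y e - r / 2‖ := by gcongr; exact G.norm_sum_netOut_le _ S
      _ = ∑ e ∈ G.boundary S, (r - 2 * ‖f e‖) := by
          rw [mul_sum]
          refine sum_congr rfl fun e _ ↦ ?_
          rw [Real.norm_eq_abs, hy, abs_of_nonneg (sub_nonneg.2 (hnorm e))]
          ring

theorem sum_boundary_lt_of_one_lt_norm {e₀ : G.E} (h₀ : 1 ≤ ‖f e₀‖)
    (hf : ∀ e ≠ e₀, 1 < ‖f e‖) {S : Finset G.V} (hS : 1 < #(G.boundary S)) :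
    ∑ e ∈ G.boundary S, (r - 2 * ‖f e‖) < (r - 2) * #(G.boundary S) := by
  have hle : ∀ e, 1 ≤ ‖f e‖ := fun e ↦ by
    rcases eq_or_ne e e₀ with rfl | he
    exacts [h₀, (hf e he).le]
  obtain ⟨e, he, hne⟩ := exists_mem_ne hS e₀
  calc ∑ e ∈ G.boundary S, (r - 2 * ‖f e‖) < ∑ _e ∈ G.boundary S, (r - 2) :=
        sum_lt_sum (fun e _ ↦ by linarith [hle e]) ⟨e, he, by linarith [hf e hne]⟩
    _ = (r - 2) * #(G.boundary S) := by rw [sum_const, nsmul_eq_mul, mul_comm]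

end BalancedValuation

theorem isFlow_addEdge_deleteEdge_iff [AddCommMonoid M] (e₀ : G.E) (f : G.E → M) :
    ((G.deleteEdge e₀).addEdge (G.src e₀) (G.tgt e₀)).IsFlow (f ∘ Equiv.optionSubtypeNe e₀) ↔
      G.IsFlow f := by
  refine forall_congr' fun v ↦ ?_
  simp only [sum_filter]
  refine Eq.congr ?_ ?_ <;>
  · refine Fintype.sum_equiv (Equiv.optionSubtypeNe e₀) _ _ fun e ↦ ?_
    cases e <;> simp [addEdge, deleteEdge] <;> rfl

end Multigraph

theorem mem_CPcap_iff {r : ℝ} {G : Multigraph} {cap : G.E → Set (AddCircle r)}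
    (hcap : ∀ e, ∀ x ∈ cap e, -x ∈ cap e) {u v : G.V} {t : AddCircle r} :
    t ∈ CPcap r G cap u v ↔
      ∃ f : Option G.E → AddCircle r,
        (G.addEdge u v).IsFlow f ∧ (∀ e, f (some e) ∈ cap e) ∧ f none = t := by
  constructor
  · rintro ⟨σ, f, hf, hmem, rfl⟩
    have hunit : ∀ (u : ℤˣ) (e : G.E), (u : ℤ) • f (some e) ∈ cap e := fun u e ↦ by
      rcases Int.units_eq_one_or u with rfl | rfl
      · simpa using hmem e
      · simpa using hcap e _ (hmem e)
    refine ⟨fun e ↦ ((σ none * σ e : ℤˣ) : ℤ) • f e, fun v ↦ ?_, fun e ↦ hunit _ e, ?_⟩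
    · simp only [Units.val_mul, mul_smul, ← smul_sum, hf v]
    · simp
  · rintro ⟨f, hf, hmem, rfl⟩
    refine ⟨fun _ ↦ 1, f, ?_, hmem, rfl⟩
    simpa only [Multigraph.IsFlowOn, Units.val_one, one_smul] using hf

theorem mem_CPcap_deleteEdge_iff {r : ℝ} {G : Multigraph} {e₀ : G.E} {K : Set (AddCircle r)}
    (hK : ∀ x ∈ K, -x ∈ K) {t : AddCircle r} :
    t ∈ CPcap r (G.deleteEdge e₀) (fun _ ↦ K) (G.src e₀) (G.tgt e₀) ↔
      ∃ f : G.E → AddCircle r, G.IsFlow f ∧ (∀ e ≠ e₀, f e ∈ K) ∧ f e₀ = t := by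
  refine (mem_CPcap_iff fun _ ↦ hK).trans ?_
  let φ := Equiv.optionSubtypeNe e₀
  constructor
  · rintro ⟨f, hf, hmem, rfl⟩
    let g : Option {e // e ≠ e₀} → AddCircle r := f
    have hg : (g ∘ φ.symm) ∘ φ = f := by rw [Function.comp_assoc, φ.symm_comp_self]; rfl
    refine ⟨g ∘ φ.symm, (G.isFlow_addEdge_deleteEdge_iff e₀ _).1 (hg ▸ hf), fun e he ↦ ?_, ?_⟩
    · rw [Function.comp_apply, Equiv.optionSubtypeNe_symm_of_ne he]
      exact hmem ⟨e, he⟩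
    · exact congrArg g (Equiv.optionSubtypeNe_symm_self e₀)
  · rintro ⟨f, hf, hmem, rfl⟩
    exact ⟨f ∘ φ, (G.isFlow_addEdge_deleteEdge_iff e₀ f).2 hf, fun e ↦ hmem e.1 e.2, rfl⟩

section StronglyRegular

open Matrix

variable {V : Type*} [Fintype V] {G : SimpleGraph V} [DecidableRel G.Adj]

theorem adjMatrix_mulVec_mulVec_of_isSRGWith {R : Type*} [Ring R] {n k l m : ℕ}
    (hG : G.IsSRGWith n k l m) {w : V → R} (hw : ∑ v, w v = 0) :
    G.adjMatrix R *ᵥ (G.adjMatrix R *ᵥ w) =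
      ((k : R) - m) • w + ((l : R) - m) • (G.adjMatrix R *ᵥ w) := by
  classical
  have hcompl : Gᶜ.adjMatrix R *ᵥ w = -w - G.adjMatrix R *ᵥ w := by
    have hJ := G.one_add_adjMatrix_add_compl_adjMatrix_eq_of_one R
    rw [G.compl_adjMatrix_eq_adjMatrix_compl R] at hJ
    have hJw : (of 1 : Matrix V V R) *ᵥ w = 0 := by
      ext v
      simp [mulVec, dotProduct, hw]
    rw [← hJ, add_mulVec, add_mulVec, one_mulVec] at hJw
    rw [← sub_eq_zero, ← hJw]
    abel
  rw [mulVec_mulVec, ← sq, hG.matrix_eq, add_mulVec, add_mulVec, smul_mulVec, smul_mulVec,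
    smul_mulVec, one_mulVec, hcompl]
  simp only [sub_smul, Nat.cast_smul_eq_nsmul, smul_sub, smul_neg]
  abel

theorem adjMatrix_mulVec_eq_neg_or_of_isRegularOfDegree_three (hG : G.IsRegularOfDegree 3)
    {w : V → ℤ} (hw : ∀ v, w v = 1 ∨ w v = -1)
    (hpath : ∀ v a b, G.Adj v a → G.Adj v b → a ≠ b → w a = w v → w b ≠ w v) (v : V) :
    (G.adjMatrix ℤ *ᵥ w) v = -w v ∨ (G.adjMatrix ℤ *ᵥ w) v = -3 * w v := by
  classical
  obtain ⟨a, b, c, hab, hac, hbc, hN⟩ :=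
    card_eq_three.1 ((G.card_neighborFinset_eq_degree v).trans (hG v))
  have hadj : G.Adj v a ∧ G.Adj v b ∧ G.Adj v c := by
    simp only [← SimpleGraph.mem_neighborFinset, hN]
    simp
  have hsum : (G.adjMatrix ℤ *ᵥ w) v = w a + (w b + w c) := by
    rw [SimpleGraph.adjMatrix_mulVec_apply, hN, sum_insert (by simp [hab, hac]), sum_pair hbc]
  have h_ab := hpath v a b hadj.1 hadj.2.1 hab
  have h_ac := hpath v a c hadj.1 hadj.2.2 hac
  have h_bc := hpath v b c hadj.2.1 hadj.2.2 hbc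
  have hwv := hw v
  have hwa := hw a
  have hwb := hw b
  have hwc := hw c
  omega

theorem exists_adj_adj_eq_of_isSRGWith (hG : G.IsSRGWith 10 3 0 1) {w : V → ℤ}
    (hw : ∀ v, w v = 1 ∨ w v = -1) (hsum : ∑ v, w v = 0) :
    ∃ v a b, G.Adj v a ∧ G.Adj v b ∧ a ≠ b ∧ w a = w v ∧ w b = w v := by
  by_contra! hpath
  let s := G.adjMatrix ℤ *ᵥ w
  have hdvd : ∀ v, 6 ∣ s v * s v + w v * s v := fun v ↦ by
    rcases adjMatrix_mulVec_eq_neg_or_of_isRegularOfDegree_three hG.regular hw hpath v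
      with hs | hs <;> rcases hw v with hv | hv <;> simp only [s, hs, hv] <;> norm_num
  have htotal : s ⬝ᵥ s + w ⬝ᵥ s = 20 := by
    have hww : w ⬝ᵥ w = 10 := by
      have hsq : ∀ v, w v * w v = 1 := fun v ↦ by rcases hw v with h | h <;> simp [h]
      simp [dotProduct, hsq, hG.card]
    have hss : s ⬝ᵥ s = G.adjMatrix ℤ *ᵥ s ⬝ᵥ w := by
      conv_lhs => rw [dotProduct_mulVec, ← mulVec_transpose, SimpleGraph.transpose_adjMatrix]
    rw [hss, adjMatrix_mulVec_mulVec_of_isSRGWith hG hsum, add_dotProduct, smul_dotProduct,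
      smul_dotProduct, hww, dotProduct_comm w s]
    simp [s]
  have hdvd_total : (6 : ℤ) ∣ s ⬝ᵥ s + w ⬝ᵥ s := by
    rw [dotProduct, dotProduct, ← sum_add_distrib]
    exact dvd_sum fun v _ ↦ hdvd v
  omega

end StronglyRegular

section Petersen

/-- The Petersen graph as a simple graph on the vertices of the multigraph `petersen`, giving
access to strong regularity. -/
def petersenGraph : SimpleGraph petersen.V where
  Adj s t := Disjoint s.1 t.1
  symm := ⟨fun _ _ h ↦ h.symm⟩
  loopless := ⟨fun s h ↦ by simpa [disjoint_self.1 h] using s.2⟩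

instance : DecidableRel petersenGraph.Adj :=
  fun s t ↦ inferInstanceAs (Decidable (Disjoint s.1 t.1))

theorem isSRGWith_petersenGraph : petersenGraph.IsSRGWith 10 3 0 1 where
  card := by decide +kernel
  regular := by unfold SimpleGraph.IsRegularOfDegree; decide +kernel
  of_adj := by decide +kernel
  of_not_adj := by unfold Pairwise; decide +kernel

theorem degree_petersen : ∀ v, petersen.degree v = 3 := by decide +kernel

theorem card_boundary_petersen_singleton : ∀ v, #(petersen.boundary {v}) = 3 := by
  decide +kernel

theorem card_boundary_petersen_path : ∀ v a b, petersenGraph.Adj v a → petersenGraph.Adj v b →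
    a ≠ b → #(petersen.boundary {v, a, b}) = 5 := by
  decide +kernel

theorem norm_lt_one_of_isFlow_petersen {f : petersen.E → AddCircle (5 : ℝ)}
    (hf : petersen.IsFlow f) {e₀ : petersen.E} (hcap : ∀ e ≠ e₀, 1 < ‖f e‖) : ‖f e₀‖ < 1 := by
  by_contra! h₀
  obtain ⟨w, hparity, hbound⟩ := hf.exists_balanced_valuation (by norm_num)
  have hlt : ∀ S, 1 < #(petersen.boundary S) →
      5 * |∑ v ∈ S, w v| < 3 * #(petersen.boundary S) := fun S hS ↦ by
    have hreal : 5 * |∑ v ∈ S, (w v : ℝ)| < 3 * #(petersen.boundary S) := by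
      linarith [hbound S, Multigraph.sum_boundary_lt_of_one_lt_norm h₀ hcap hS]
    exact_mod_cast hreal
  have hw : ∀ v, w v = 1 ∨ w v = -1 := fun v ↦ by
    have hcut := card_boundary_petersen_singleton v
    have hv := hlt {v} (by omega)
    rw [sum_singleton, hcut] at hv
    obtain ⟨k, hk⟩ := hparity v
    rw [degree_petersen] at hk
    obtain ⟨hlo, hhi⟩ := abs_lt.1 (show |w v| < 2 by omega)
    omega
  have hsum : ∑ v, w v = 0 := by
    have huniv := hbound univ
    rw [Multigraph.boundary_univ, sum_empty] at huniv
    have habs : |∑ v, (w v : ℝ)| = 0 := by linarith [abs_nonneg (∑ v, (w v : ℝ))]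
    exact_mod_cast abs_eq_zero.1 habs
  obtain ⟨v, a, b, hva, hvb, hab, ha, hb⟩ :=
    exists_adj_adj_eq_of_isSRGWith isSRGWith_petersenGraph hw hsum
  have hcut := card_boundary_petersen_path v a b hva hvb hab
  have hpath := hlt {v, a, b} (by omega)
  rw [sum_insert (by simp [hva.ne, hvb.ne]), sum_pair hab, ha, hb, hcut] at hpath
  rcases hw v with hv | hv <;> simp [hv] at hpath

/-- The harmonic potential on the Petersen graph minus `e₀` that drives a current of `4` from
`tgt e₀` to `src e₀`. -/
def petersenPotential (e₀ : petersen.E) (x : petersen.V) : ℤ :=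
  if x = petersen.tgt e₀ then 3
  else if x = petersen.src e₀ then -3
  else if petersenGraph.Adj x (petersen.tgt e₀) then 1
  else if petersenGraph.Adj x (petersen.src e₀) then -1
  else 0

/-- The integral flow made of the current of `petersenPotential` and its return through `e₀`; it
carries the prescribed value on `e₀`. -/
def petersenCurrent (e₀ e : petersen.E) : ℤ :=
  if e = e₀ then 4
  else petersenPotential e₀ (petersen.src e) - petersenPotential e₀ (petersen.tgt e)

/-- Integral lift of a nowhere-zero `ℤ/4`-flow on the Petersen graph minus `e₀`, dominating
`petersenCurrent` there. An edge between two zeros of the potential carries `2` in its reference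
direction; the choice is immaterial as `2 = -2` in `ℤ/4`. -/
def petersenFourFlow (e₀ e : petersen.E) : ℤ :=
  if petersenPotential e₀ (petersen.src e) = 0 ∧ petersenPotential e₀ (petersen.tgt e) = 0 then 2
  else |petersenPotential e₀ (petersen.src e)| - |petersenPotential e₀ (petersen.tgt e)|

theorem netOut_petersenCurrent : ∀ e₀ v, petersen.netOut (petersenCurrent e₀) v = 0 := by
  decide +kernel

theorem four_dvd_netOut_petersenFourFlow :
    ∀ e₀ v, 4 ∣ petersen.netOut (petersenFourFlow e₀) v := by
  decide +kernel

theorem petersenFourFlow_self : ∀ e₀, petersenFourFlow e₀ e₀ = 0 := by decide +kernel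

theorem abs_petersenFourFlow_mem_Icc :
    ∀ e₀ e, e ≠ e₀ → |petersenFourFlow e₀ e| ∈ Set.Icc 1 2 := by
  decide +kernel

theorem abs_petersenCurrent_le : ∀ e₀ e, e ≠ e₀ →
    |petersenCurrent e₀ e| ≤ |petersenFourFlow e₀ e| := by
  decide +kernel

theorem abs_mul_add_mul_mem_Ioo {n m t : ℝ} (hn₁ : 1 ≤ |n|) (hn₂ : |n| ≤ 2) (hm : |m| ≤ |n|)
    (ht : |t| < 1) : |n * (5 / 4) + m * (t / 4)| ∈ Set.Ioo 1 (5 - 1) := by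
  have hn : |n * (5 / 4)| = |n| * (5 / 4) := by rw [abs_mul]; norm_num
  have hmt : |m * (t / 4)| < |n| / 4 :=
    calc |m * (t / 4)| = |m| * |t| / 4 := by rw [← mul_div_assoc, abs_div, abs_mul]; norm_num
      _ ≤ |n| * |t| / 4 := by gcongr
      _ < |n| / 4 := by
        gcongr
        exact mul_lt_of_lt_one_right (one_pos.trans_le hn₁) ht
  have hlo := abs_sub_abs_le_abs_add (n * (5 / 4)) (m * (t / 4))
  have hhi := abs_add_le (n * (5 / 4)) (m * (t / 4))
  constructor <;> linarith

theorem exists_isFlow_petersen (e₀ : petersen.E) {x : AddCircle (5 : ℝ)} (hx : ‖x‖ < 1) :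
    ∃ f : petersen.E → AddCircle (5 : ℝ),
      petersen.IsFlow f ∧ (∀ e ≠ e₀, 1 < ‖f e‖) ∧ f e₀ = x := by
  obtain ⟨t, rfl, ht⟩ := exists_coe_eq_and_abs_eq_norm x
  rw [← ht] at hx
  refine ⟨fun e ↦ petersenFourFlow e₀ e • ((5 / 4 : ℝ) : AddCircle (5 : ℝ)) +
    petersenCurrent e₀ e • ((t / 4 : ℝ) : AddCircle (5 : ℝ)), ?_, fun e he ↦ ?_, ?_⟩
  · refine (petersen.isFlow_iff_netOut_eq_zero _).2 fun v ↦ ?_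
    obtain ⟨k, hk⟩ := four_dvd_netOut_petersenFourFlow e₀ v
    rw [petersen.netOut_add, petersen.netOut_zsmul_const, petersen.netOut_zsmul_const,
      netOut_petersenCurrent, zero_smul, add_zero, hk, ← AddCircle.coe_zsmul,
      AddCircle.coe_eq_zero_iff]
    refine ⟨k, ?_⟩
    simp only [zsmul_eq_mul]
    push_cast
    ring
  · simp only [← AddCircle.coe_zsmul, ← AddCircle.coe_add]
    refine lt_norm_coe_of_abs_mem_Ioo ?_
    have hflow := abs_petersenFourFlow_mem_Icc e₀ e he
    have hcurrent := abs_petersenCurrent_le e₀ e he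
    simp only [zsmul_eq_mul]
    exact abs_mul_add_mul_mem_Ioo (by exact_mod_cast hflow.1) (by exact_mod_cast hflow.2)
      (by exact_mod_cast hcurrent) hx
  · simp only [petersenFourFlow_self, petersenCurrent, if_true, zero_smul, zero_add,
      ← AddCircle.coe_zsmul]
    congr 1
    simp only [zsmul_eq_mul]
    push_cast
    ring

end Petersen

/-- For any edge `uv` of the Petersen graph, the open
5-capacity of the g-edge `P*₁₀(u,v)` obtained by deleting that edge, with
terminals `u` and `v`, equals the interval `(4,1)` of `ℝ/5ℤ`. -/
theorem petersen_minus_edge_capacity (e₀ : petersen.E) :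
    CP 5 (petersen.deleteEdge e₀) (petersen.src e₀) (petersen.tgt e₀)
      = openArc 5 4 1 := by
  have hcap : openArc 5 1 (5 - 1) = {x | 1 < ‖x‖} := openArc_one_sub_one (by norm_num)
  have harc : openArc 5 4 1 = {x | ‖x‖ < 1} := by
    convert openArc_sub_one_one (r := 5) (by norm_num) using 2
    norm_num
  ext x
  unfold CP
  rw [hcap, harc]
  refine (mem_CPcap_deleteEdge_iff fun y hy ↦ by simpa using hy).trans ⟨?_, ?_⟩
  · rintro ⟨f, hf, hf₁, rfl⟩
    exact norm_lt_one_of_isFlow_petersen hf hf₁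
  · exact exists_isFlow_petersen e₀
end

section
/- The circular flow number of the Petersen graph equals 5. -/
open Finset


open Finset

/-!
If `f` is an `r`-flow on the orientation `σ`, then `r • σ - 2 • (σ • f)` has modulus at most `r - 2`
on every edge, and its net outflow from a vertex is `r` times the imbalance (out-degree minus
in-degree) of `σ` there. Hence the imbalances over a vertex set `X` sum to at most
`(1 - 2 / r) * #(cut X)` in absolute value.

Suppose `r < 5`. In a cubic graph the imbalances are odd, and cuts of size 3 force them to be `±1`;
the three vertices of a path are separated by a cut of size at most 5, so they do not all have the
same imbalance. Thus the vector `x` of imbalances satisfies `∑ v, x v = 0`, and every vertex has at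
most one neighbour of its own sign. The adjacency matrix `A` of the Petersen graph satisfies
`A ^ 2 + A = 2 • 1 + J` with `J` the all-ones matrix, so `∑ v, ((A x) v ^ 2 + x v * (A x) v) = 20`,
whereas each summand is `6` or `0`.
-/

namespace Multigraph

variable {G : Multigraph}

/-- The net outflow of `f` at the vertex `v`, read in the reference orientation. -/
def divergence {M : Type*} [AddCommGroup M] (f : G.E → M) (v : G.V) : M :=
  ∑ e with G.src e = v, f e - ∑ e with G.tgt e = v, f e

/-- The edge cut of the vertex set `X`: the edges with exactly one end in `X`. -/
def cut (X : Finset G.V) : Finset G.E :=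
  {e | ¬(G.src e ∈ X ↔ G.tgt e ∈ X)}

/-- The number of edges leaving `v` minus the number of edges entering `v` in the orientation `σ`
(loops cancel). -/
def imbalance (σ : G.E → ℤˣ) (v : G.V) : ℤ :=
  divergence (fun e => (σ e : ℤ)) v

/-- The underlying simple graph of `G`: loops are dropped and parallel edges identified. -/
def toSimpleGraph (G : Multigraph) : SimpleGraph G.V :=
  .fromEdgeSet (Set.range fun e => s(G.src e, G.tgt e))

instance : DecidableRel G.toSimpleGraph.Adj :=
  inferInstanceAs (DecidableRel (SimpleGraph.fromEdgeSet _).Adj)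

theorem IsFlow.divergence_eq_zero {M : Type*} [AddCommGroup M] {f : G.E → M} (hf : G.IsFlow f)
    (v : G.V) : divergence f v = 0 :=
  sub_eq_zero.2 (hf v)

theorem sum_divergence {M : Type*} [AddCommGroup M] (f : G.E → M) (X : Finset G.V) :
    ∑ v ∈ X, divergence f v = ∑ e ∈ cut X, if G.src e ∈ X then f e else -f e := by
  simp only [divergence, sum_sub_distrib, sum_fiberwise_eq_sum_filter]
  simp only [cut, sum_filter, ← sum_sub_distrib]
  refine sum_congr rfl fun e _ => ?_
  by_cases hs : G.src e ∈ X <;> by_cases ht : G.tgt e ∈ X <;> simp [hs, ht]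

theorem sum_divergence_univ {M : Type*} [AddCommGroup M] (f : G.E → M) :
    ∑ v, divergence f v = 0 := by
  simp [sum_divergence, cut]

theorem abs_sum_divergence_le {M : Type*} [AddCommGroup M] [LinearOrder M] [IsOrderedAddMonoid M]
    {f : G.E → M} {c : M} (hf : ∀ e, |f e| ≤ c) (X : Finset G.V) :
    |∑ v ∈ X, divergence f v| ≤ #(cut X) • c := by
  rw [sum_divergence]
  refine (abs_sum_le_sum_abs _ _).trans (sum_le_card_nsmul _ _ _ fun e _ => ?_)
  split_ifs
  · exact hf e
  · exact (abs_neg (f e)).trans_le (hf e)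

theorem card_cut_add_two_mul_card_inner (X : Finset G.V) :
    #(cut X) + 2 * #{e | G.src e ∈ X ∧ G.tgt e ∈ X} = ∑ v ∈ X, G.degree v := by
  simp only [degree, sum_add_distrib, card_eq_sum_ones, sum_fiberwise_eq_sum_filter]
  simp only [cut, sum_filter, mul_sum, ← sum_add_distrib]
  refine sum_congr rfl fun e _ => ?_
  by_cases hs : G.src e ∈ X <;> by_cases ht : G.tgt e ∈ X <;> simp [hs, ht]

theorem card_cut_singleton_le_degree (v : G.V) : #(cut {v}) ≤ G.degree v := by
  have h := card_cut_add_two_mul_card_inner {v}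
  rw [sum_singleton] at h
  lia

theorem card_cut_path_add_four_le {u v w : G.V} (huv : G.toSimpleGraph.Adj u v)
    (hvw : G.toSimpleGraph.Adj v w) (huw : u ≠ w) :
    #(cut {u, v, w}) + 4 ≤ G.degree u + G.degree v + G.degree w := by
  obtain ⟨⟨e, he⟩, hu⟩ := huv
  obtain ⟨⟨e', he'⟩, hw⟩ := hvw
  have hne : e ≠ e' := by
    rintro rfl
    have : s(u, v) = s(v, w) := he.symm.trans he'
    grind
  set X : Finset G.V := {u, v, w} with hX
  have hinner : {e, e'} ⊆ ({e | G.src e ∈ X ∧ G.tgt e ∈ X} : Finset G.E) := by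
    grind
  have hcard := card_pair hne ▸ card_le_card hinner
  have hdeg := card_cut_add_two_mul_card_inner X
  rw [hX, sum_insert (by grind), sum_pair hw, ← hX] at hdeg
  lia

theorem odd_imbalance_iff_odd_degree (σ : G.E → ℤˣ) (v : G.V) :
    Odd (imbalance σ v) ↔ Odd (G.degree v) := by
  have hσ (e : G.E) : ((σ e : ℤ) : ZMod 2) = 1 := by
    rcases Int.units_eq_one_or (σ e) with h | h <;> simp [h]
  have hcast : (imbalance σ v : ZMod 2) = G.degree v := by
    simp [imbalance, divergence, degree, hσ, CharTwo.sub_eq_add]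
  rw [← ZMod.intCast_eq_one_iff_odd, ← ZMod.natCast_eq_one_iff_odd, hcast]

section Flow

variable {r : ℝ} {σ : G.E → ℤˣ} {f : G.E → ℝ}

theorem divergence_two_mul_sub (hf : G.IsFlowOn σ f) (v : G.V) :
    divergence (fun e => σ e * (r - 2 * f e)) v = r * imbalance σ v := by
  have h := IsFlow.divergence_eq_zero hf v
  simp only [divergence, zsmul_eq_mul] at h
  simp only [divergence, imbalance, mul_sub, sum_sub_distrib, mul_left_comm _ (2 : ℝ), ← mul_sum,
    Int.cast_sub, Int.cast_sum]
  simp only [← sum_mul]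
  linear_combination -2 * h

theorem abs_mul_sum_imbalance_le (hf : G.IsFlowOn σ f) (hb : ∀ e, f e ∈ Set.Icc 1 (r - 1))
    (X : Finset G.V) : |r * ∑ v ∈ X, (imbalance σ v : ℝ)| ≤ #(cut X) * (r - 2) := by
  have hbound (e : G.E) : |(σ e : ℝ) * (r - 2 * f e)| ≤ r - 2 := by
    have hσ : |((σ e : ℤ) : ℝ)| = 1 := by
      rcases Int.units_eq_one_or (σ e) with h | h <;> simp [h]
    rw [abs_mul, hσ, one_mul, abs_le]
    constructor <;> linarith [(hb e).1, (hb e).2]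
  simpa only [divergence_two_mul_sub hf, ← mul_sum, nsmul_eq_mul] using
    abs_sum_divergence_le hbound X

theorem mul_abs_sum_imbalance_lt {s : ℝ} {n : ℕ} (hf : G.IsFlowOn σ f)
    (hb : ∀ e, f e ∈ Set.Icc 1 (r - 1)) (hr : 2 ≤ r) (hrs : r < s) (hn : 0 < n) {X : Finset G.V}
    (hX : #(cut X) ≤ n) : s * |∑ v ∈ X, (imbalance σ v : ℝ)| < (s - 2) * n := by
  have hle : r * |∑ v ∈ X, (imbalance σ v : ℝ)| ≤ (r - 2) * n := calc
    _ = |r * ∑ v ∈ X, (imbalance σ v : ℝ)| := by rw [abs_mul, abs_of_nonneg (a := r) (by linarith)]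
    _ ≤ #(cut X) * (r - 2) := abs_mul_sum_imbalance_le hf hb X
    _ ≤ (r - 2) * n := by
      rw [mul_comm]
      gcongr
  have hn' : (0 : ℝ) < n := mod_cast hn
  refine lt_of_mul_lt_mul_left (a := r) ?_ (by linarith)
  calc r * (s * |∑ v ∈ X, (imbalance σ v : ℝ)|)
      = s * (r * |∑ v ∈ X, (imbalance σ v : ℝ)|) := mul_left_comm ..
    _ ≤ s * ((r - 2) * n) := by gcongr; linarith
    _ < r * ((s - 2) * n) := by nlinarith

end Flow

theorem HasCNZF.two_le [Nonempty G.E] {r : ℝ} (h : G.HasCNZF r) : 2 ≤ r := by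
  obtain ⟨σ, f, -, hb⟩ := h
  obtain ⟨e⟩ := ‹Nonempty G.E›
  linarith [(hb e).1, (hb e).2]

theorem hasCNZF_of_isFlow {r : ℝ} {g : G.E → ℝ} (hg : G.IsFlow g)
    (hb : ∀ e, |g e| ∈ Set.Icc 1 (r - 1)) : G.HasCNZF r := by
  refine ⟨fun e => if g e < 0 then -1 else 1, fun e => |g e|, ?_, hb⟩
  have habs : (fun e => (((if g e < 0 then -1 else 1 : ℤˣ) : ℤ) • |g e|)) = g := by
    funext e
    split_ifs with h
    · simp [abs_of_neg h]
    · simp [abs_of_nonneg (not_lt.1 h)]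
  rwa [IsFlowOn, habs]

end Multigraph

section StronglyRegular

open Matrix

variable {V : Type*} [Fintype V] {H : SimpleGraph V} [DecidableRel H.Adj]

theorem adjMatrix_mulVec_mulVec_of_isSRGWith_s18 {R : Type*} [CommRing R] {n k l m : ℕ}
    (hH : H.IsSRGWith n k l m) (x : V → R) :
    H.adjMatrix R *ᵥ (H.adjMatrix R *ᵥ x) =
      (k - m : R) • x + (l - m : R) • (H.adjMatrix R *ᵥ x) + fun _ => (m : R) * ∑ v, x v := by
  classical
  have hcompl : Hᶜ.adjMatrix R = .of (fun _ _ => 1) - 1 - H.adjMatrix R := by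
    ext v w
    by_cases hvw : v = w <;> by_cases hadj : H.Adj v w <;> simp_all
  have hones : (.of fun _ _ => 1 : Matrix V V R) *ᵥ x = fun _ => ∑ v, x v := by
    ext v
    simp [mulVec, dotProduct]
  rw [mulVec_mulVec, ← sq, hH.matrix_eq, hcompl]
  simp only [add_mulVec, sub_mulVec, smul_mulVec, one_mulVec, hones]
  ext v
  simp only [nsmul_eq_mul, Pi.add_apply, Pi.mul_apply, Pi.natCast_apply,
    SimpleGraph.adjMatrix_mulVec_apply, Pi.sub_apply, Pi.smul_apply, smul_eq_mul]
  ring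

theorem dotProduct_adjMatrix_mulVec_self_of_isSRGWith {R : Type*} [CommRing R] {n k l m : ℕ}
    (hH : H.IsSRGWith n k l m) (x : V → R) :
    (H.adjMatrix R *ᵥ x) ⬝ᵥ (H.adjMatrix R *ᵥ x) =
      (k - m) * (x ⬝ᵥ x) + (l - m) * (x ⬝ᵥ (H.adjMatrix R *ᵥ x)) + m * (∑ v, x v) ^ 2 := calc
  _ = x ⬝ᵥ (H.adjMatrix R *ᵥ (H.adjMatrix R *ᵥ x)) := by
    rw [dotProduct_mulVec x, ← mulVec_transpose, SimpleGraph.transpose_adjMatrix]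
  _ = _ := by
    rw [adjMatrix_mulVec_mulVec_of_isSRGWith_s18 hH]
    simp only [dotProduct_add, dotProduct_smul, smul_eq_mul]
    simp only [dotProduct, ← sum_mul]
    ring

theorem mul_adjMatrix_mulVec_of_abs_eq_one {x : V → ℤ} (hx : ∀ v, |x v| = 1) (v : V) :
    x v * (H.adjMatrix ℤ *ᵥ x) v = 2 * #{u ∈ H.neighborFinset v | x u = x v} - H.degree v := by
  have hmul (u : V) : x v * x u = 2 * (if x u = x v then 1 else 0) - 1 := by
    rcases abs_eq_abs.1 ((hx u).trans abs_one.symm) with hu | hu <;>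
      rcases abs_eq_abs.1 ((hx v).trans abs_one.symm) with hv | hv <;> simp [hu, hv]
  rw [SimpleGraph.adjMatrix_mulVec_apply, mul_sum]
  simp only [hmul, sum_sub_distrib, ← mul_sum, sum_boole]
  simp

theorem exists_monochromatic_path_of_isSRGWith (hH : H.IsSRGWith 10 3 0 1) {x : V → ℤ}
    (hx : ∀ v, |x v| = 1) (hsum : ∑ v, x v = 0) :
    ∃ u v w, H.Adj u v ∧ H.Adj v w ∧ u ≠ w ∧ x u = x v ∧ x w = x v := by
  by_contra! hpath
  have hsame (v : V) : #{u ∈ H.neighborFinset v | x u = x v} ≤ 1 := by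
    rw [card_le_one]
    intro u hu w hw
    simp only [mem_filter, SimpleGraph.mem_neighborFinset] at hu hw
    by_contra huw
    exact hpath u v w hu.1.symm hw.1 huw hu.2 hw.2
  have hsq (v : V) : x v ^ 2 = 1 := by rw [← sq_abs, hx, one_pow]
  set y := H.adjMatrix ℤ *ᵥ x with hy
  have hdvd (v : V) : 6 ∣ y v ^ 2 + x v * y v := by
    have hxy : x v * y v = 2 * #{u ∈ H.neighborFinset v | x u = x v} - 3 := by
      rw [hy, mul_adjMatrix_mulVec_of_abs_eq_one hx, hH.regular v, Nat.cast_ofNat]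
    have hyy : y v ^ 2 = (x v * y v) ^ 2 := by rw [mul_pow, hsq, one_mul]
    rw [hyy, hxy]
    have := hsame v
    interval_cases #{u ∈ H.neighborFinset v | x u = x v} <;> norm_num
  have htotal : ∑ v, (y v ^ 2 + x v * y v) = 20 := by
    have hquad := dotProduct_adjMatrix_mulVec_self_of_isSRGWith hH x
    have hxx : x ⬝ᵥ x = 10 := by simp [dotProduct, ← sq, hsq, hH.card]
    rw [← hy, hxx, hsum] at hquad
    simp only [sum_add_distrib, sq]
    simp only [dotProduct] at hquad
    push_cast at hquad
    linarith
  have h : (6 : ℤ) ∣ 20 := htotal ▸ dvd_sum fun v _ => hdvd v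
  norm_num at h

end StronglyRegular

theorem Multigraph.five_le_of_hasCNZF {G : Multigraph} {r : ℝ} (hdeg : ∀ v, G.degree v = 3)
    (hG : G.toSimpleGraph.IsSRGWith 10 3 0 1) (h : G.HasCNZF r) : 5 ≤ r := by
  have : Nonempty G.E := by
    by_contra hE
    have : IsEmpty G.E := not_nonempty_iff.1 hE
    have : Nonempty G.V := Fintype.card_pos_iff.1 (by simp [hG.card])
    simpa [degree] using hdeg (Classical.arbitrary G.V)
  have hr := h.two_le
  obtain ⟨σ, f, hf, hb⟩ := h
  by_contra! hr5
  have hcut {n : ℕ} (hn : 0 < n) {X : Finset G.V} (hX : #(cut X) ≤ n) :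
      5 * |∑ v ∈ X, imbalance σ v| < 3 * n := by
    have := mul_abs_sum_imbalance_lt hf hb hr hr5 hn hX
    rw [show (5 : ℝ) - 2 = 3 by norm_num] at this
    exact_mod_cast this
  have hone (v : G.V) : |imbalance σ v| = 1 := by
    have hlt := hcut three_pos ((card_cut_singleton_le_degree v).trans_eq (hdeg v))
    have hodd : Odd (imbalance σ v) := by
      rw [odd_imbalance_iff_odd_degree, hdeg]
      decide
    rw [sum_singleton] at hlt
    grind
  obtain ⟨u, v, w, huv, hvw, huw, hu, hw⟩ :=
    exists_monochromatic_path_of_isSRGWith hG hone (sum_divergence_univ _)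
  have hle : #(cut {u, v, w}) ≤ 5 := by
    have := card_cut_path_add_four_le huv hvw huw
    simp only [hdeg] at this
    lia
  have hlt := hcut (by norm_num) hle
  have hsum : ∑ z ∈ {u, v, w}, imbalance σ z = 3 * imbalance σ v := by
    rw [sum_insert (by grind [huv.ne]), sum_pair hvw.ne, hu, hw]
    ring
  rw [hsum, abs_mul, hone] at hlt
  norm_num at hlt

theorem card_filter_disjoint {α : Type*} [Fintype α] [DecidableEq α] (s : Finset α) (k : ℕ) :
    #{t : {t : Finset α // #t = k} | Disjoint s t.1} = (Fintype.card α - #s).choose k := by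
  have hmap : ({t : {t : Finset α // #t = k} | Disjoint s t.1} : Finset _).map (.subtype _) =
      powersetCard k sᶜ := by
    ext t
    simp [mem_powersetCard, subset_compl_iff_disjoint_left, and_comm]
  rw [← card_compl, ← card_powersetCard, ← hmap, card_map]

theorem card_inter_eq_one_of_card_eq_two {α : Type*} [DecidableEq α] {s t : Finset α}
    (hs : #s = 2) (ht : #t = 2) (hst : s ≠ t) (hd : ¬Disjoint s t) : #(s ∩ t) = 1 := by
  have hpos : 0 < #(s ∩ t) := by
    rwa [card_pos, ← not_disjoint_iff_nonempty_inter]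
  have hlt : #(s ∩ t) < 2 := by
    by_contra! hle
    have hsub : s ⊆ t :=
      inter_eq_left.1 (eq_of_subset_of_card_le inter_subset_left (hs.trans_le hle))
    exact hst (eq_of_subset_of_card_le hsub (ht.trans hs.symm).le)
  lia

theorem pkey_injective : Function.Injective pkey := by
  unfold Function.Injective
  decide +kernel

theorem petersen_adj_iff_disjoint {u v : petersen.V} :
    petersen.toSimpleGraph.Adj u v ↔ Disjoint u.1 v.1 := by
  constructor
  · rintro ⟨⟨e, he⟩, -⟩
    rcases Sym2.eq_iff.1 he with ⟨rfl, rfl⟩ | ⟨rfl, rfl⟩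
    · exact e.2.1
    · exact e.2.1.symm
  · intro hd
    have hne : u ≠ v := by
      rintro rfl
      simpa [disjoint_self.1 hd] using u.2
    refine ⟨?_, hne⟩
    rcases lt_or_gt_of_ne fun hkey => hne (Subtype.ext (pkey_injective hkey)) with hlt | hgt
    · exact ⟨⟨(u, v), hd, hlt⟩, rfl⟩
    · exact ⟨⟨(v, u), hd.symm, hgt⟩, Sym2.eq_swap⟩

theorem card_filter_disjoint_petersen (s : Finset (Fin 5)) :
    #{w : petersen.V | Disjoint s w.1} = (5 - #s).choose 2 :=
  card_filter_disjoint s 2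

theorem card_neighborFinset_petersen (v : petersen.V) :
    #(petersen.toSimpleGraph.neighborFinset v) = (5 - #v.1).choose 2 := by
  rw [← card_filter_disjoint_petersen]
  congr 1
  ext w
  simp [petersen_adj_iff_disjoint]

theorem card_commonNeighbors_petersen (u v : petersen.V) :
    Fintype.card (petersen.toSimpleGraph.commonNeighbors u v) = (5 - #(u.1 ∪ v.1)).choose 2 := by
  rw [← card_filter_disjoint_petersen, ← Set.toFinset_card]
  congr 1
  ext w
  simp [SimpleGraph.mem_commonNeighbors, petersen_adj_iff_disjoint, disjoint_union_left]

theorem isSRGWith_petersen : petersen.toSimpleGraph.IsSRGWith 10 3 0 1 where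
  card := Fintype.card_finset_len 2
  regular v := by
    rw [← SimpleGraph.card_neighborFinset_eq_degree, card_neighborFinset_petersen, v.2]
    rfl
  of_adj u v huv := by
    rw [card_commonNeighbors_petersen,
      card_union_of_disjoint (petersen_adj_iff_disjoint.1 huv), u.2, v.2]
    rfl
  of_not_adj u v huv hadj := by
    have hinter := card_inter_eq_one_of_card_eq_two u.2 v.2 (Subtype.coe_ne_coe.2 huv)
      (petersen_adj_iff_disjoint.not.1 hadj)
    rw [card_commonNeighbors_petersen, card_union, u.2, v.2, hinter]
    rfl

/-- An integer nowhere-zero flow on the Petersen graph with values of modulus at most `4`; edges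
are addressed by the keys of their ends, so that `3, 24` stands for `{0, 1}, {3, 4}`. -/
def petersenFlow (e : petersen.E) : ℤ :=
  match pkey e.1.1.1, pkey e.1.2.1 with
  | 3, 24 => -2
  | 5, 10 => -2
  | 6, 9 => -2
  | 9, 20 => -3
  | 10, 17 => -4
  | 10, 20 => 2
  | 12, 17 => 3
  | 12, 18 => -2
  | _, _ => 1

theorem isFlow_petersenFlow : petersen.IsFlow petersenFlow := by
  unfold Multigraph.IsFlow
  decide +kernel

theorem one_le_abs_petersenFlow_le_four : ∀ e, 1 ≤ |petersenFlow e| ∧ |petersenFlow e| ≤ 4 := by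
  decide +kernel

theorem hasCNZF_petersen : petersen.HasCNZF 5 := by
  refine Multigraph.hasCNZF_of_isFlow (g := fun e => (petersenFlow e : ℝ)) (fun v => ?_) fun e => ?_
  · beta_reduce
    exact_mod_cast isFlow_petersenFlow v
  · rw [show (5 : ℝ) - 1 = 4 by norm_num, Set.mem_Icc]
    exact_mod_cast one_le_abs_petersenFlow_le_four e

/-- The circular flow number of the Petersen graph equals
5. -/
theorem circFlowNumber_petersen : circFlowNumber petersen = ((5 : ℝ) : EReal) := by
  apply le_antisymm
  · exact sInf_le ⟨5, rfl, hasCNZF_petersen⟩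
  · refine le_sInf ?_
    rintro _ ⟨r, rfl, hr⟩
    exact EReal.coe_le_coe_iff.2
      (Multigraph.five_le_of_hasCNZF degree_petersen isSRGWith_petersen hr)
end
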